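/- Let π_1, π_2 be a regular system of parameters of R, let n, m, a_3, b_3, a_4, b_4 ∈ ℤ and ξ_1, ξ_3, ξ_4 ∈ R^×, and set b := {π_1^n π_2^m ξ_1}_2 ⊗ (π_1^{a_3} π_2^{b_3} ξ_3) ∧ (π_1^{a_4} π_2^{b_4} ξ_4) ∈ B_2(L)⊗Λ^2 L^×. Then ∂_{ν̄_p}(∂_{ν_p}(b)) = 0 in B_2(k) for all but finitely many height-one primes p of R with R/p regular, and the sum Σ_p ∂_{ν̄_p}(∂_{ν_p}(b)), taken over all height-one primes p of R with R/p regular, equals 0 in B_2(k). -/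

import Mathlib

open scoped TensorProduct
open ExteriorAlgebra

noncomputable section ChowPrelim

universe u

/-- The ℚ-vector space `F^× ⊗ ℚ` attached to a field `F`. -/
abbrev UnitsQ (F : Type u) [Field F] : Type u := ℚ ⊗[ℤ] (Additive Fˣ)

/-- The canonical map `F → F^× ⊗ ℚ`, sending a nonzero `x` to `x ⊗ 1` and `0` to `0`. -/
noncomputable def mkQ {F : Type u} [Field F] (x : F) : UnitsQ F :=
  letI := Classical.dec (x = 0)
  if h : x = 0 then 0 else (1 : ℚ) ⊗ₜ[ℤ] (Additive.ofMul (Units.mk0 x h))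

/-- The wedge `x₁ ∧ ⋯ ∧ xₙ ∈ Λ^n (F^× ⊗ ℚ)` of a family of elements of `F`. -/
noncomputable def wedgeF {F : Type u} [Field F] (n : ℕ) (x : Fin n → F) :
    ⋀[ℚ]^n (UnitsQ F) :=
  ⟨ExteriorAlgebra.ιMulti ℚ n (fun i => mkQ (x i)),
    ExteriorAlgebra.ιMulti_range ℚ n ⟨_, rfl⟩⟩

/-- Wedge of an abstract family of vectors. -/
noncomputable def wedgeV {M : Type u} [AddCommGroup M] [Module ℚ M] (n : ℕ) (v : Fin n → M) :
    ⋀[ℚ]^n M :=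
  ⟨ExteriorAlgebra.ιMulti ℚ n v, ExteriorAlgebra.ιMulti_range ℚ n ⟨_, rfl⟩⟩

/-- The product `a ∧ v₁ ∧ ⋯ ∧ v_q : Λ^r M` of an element `a ∈ Λ^p M` with `q` further vectors,
where `p + q = r`. -/
noncomputable def wedgeMulC {M : Type u} [AddCommGroup M] [Module ℚ M] (p q r : ℕ)
    (h : p + q = r) (a : ⋀[ℚ]^p M) (v : Fin q → M) : ⋀[ℚ]^r M :=
  ⟨a.1 * (ExteriorAlgebra.ιMulti ℚ q v : ExteriorAlgebra ℚ M), by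
    subst h
    have hmem : (ExteriorAlgebra.ιMulti ℚ q v : ExteriorAlgebra ℚ M) ∈
        (LinearMap.range (ι ℚ : M →ₗ[ℚ] ExteriorAlgebra ℚ M)) ^ q :=
      ExteriorAlgebra.ιMulti_range ℚ q ⟨_, rfl⟩
    have h2 := Submodule.mul_mem_mul a.2 hmem
    rw [← pow_add] at h2
    exact h2⟩

/-- The functorial map `Λ^n M → Λ^n N` induced by a linear map. -/
noncomputable def powMap {M N : Type u} [AddCommGroup M] [Module ℚ M]
    [AddCommGroup N] [Module ℚ N] (n : ℕ) (f : M →ₗ[ℚ] N) :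
    ⋀[ℚ]^n M →ₗ[ℚ] ⋀[ℚ]^n N :=
  (ExteriorAlgebra.map f).toLinearMap.restrict (p := ⋀[ℚ]^n M) (q := ⋀[ℚ]^n N)
    (by
      intro x hx
      have h : Submodule.map (ExteriorAlgebra.map f).toLinearMap (⋀[ℚ]^n M) ≤ ⋀[ℚ]^n N := by
        rw [← ExteriorAlgebra.ιMulti_span_fixedDegree, ← ExteriorAlgebra.ιMulti_span_fixedDegree,
          Submodule.map_span]
        refine Submodule.span_le.2 ?_
        rintro _ ⟨_, ⟨v, rfl⟩, rfl⟩
        exact Submodule.subset_span ⟨f ∘ v, (ExteriorAlgebra.map_apply_ιMulti f v).symm⟩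
      exact h ⟨x, hx, rfl⟩)

/-- The linear map `F^× ⊗ ℚ → K^× ⊗ ℚ` induced by a field embedding. -/
noncomputable def unitsQMap {F K : Type u} [Field F] [Field K] (j : F →+* K) :
    UnitsQ F →ₗ[ℚ] UnitsQ K :=
  LinearMap.baseChange ℚ
    ((MonoidHom.toAdditive (Units.map (j : F →* K))).toIntLinearMap)

section PreBloch

variable (F : Type u) [Field F]

/-- Auxiliary "difference" of two points of `P^1(F) = Option F` (`none` is `∞`),
used to define the cross-ratio. -/
def pdiff : Option F → Option F → F
  | some a, some b => a - b
  | _, _ => 1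

/-- The cross-ratio of four points of `P^1(F)`, as an element of `F`
(it lies in `F ∖ {0,1}` when the four points are distinct). -/
def crossRatio (x1 x2 x3 x4 : Option F) : F :=
  (pdiff F x1 x3 * pdiff F x2 x4) / (pdiff F x1 x4 * pdiff F x2 x3)

/-- The subspace of relations defining the pre-Bloch group: `{0}₂, {1}₂, {∞}₂` and the
five-term cross-ratio relations for five distinct points of `P^1(F)`. -/
def B2Rel : Submodule ℚ (Option F →₀ ℚ) :=
  Submodule.span ℚ
    ({Finsupp.single (some 0) 1, Finsupp.single (some 1) 1, Finsupp.single none 1} ∪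
      {r | ∃ x : Fin 5 → Option F, Function.Injective x ∧
        r = ∑ i : Fin 5, ((-1 : ℚ) ^ (i : ℕ)) •
          Finsupp.single (some (crossRatio F (x (i.succAbove 0)) (x (i.succAbove 1))
            (x (i.succAbove 2)) (x (i.succAbove 3)))) (1 : ℚ)})

/-- The pre-Bloch group `B₂(F)` (with ℚ-coefficients). -/
abbrev B2 : Type u := (Option F →₀ ℚ) ⧸ B2Rel F

/-- The generator `{x}₂` of the pre-Bloch group. -/
def B2.gen {F : Type u} [Field F] (x : F) : B2 F :=
  Submodule.Quotient.mk (Finsupp.single (some x) 1)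

end PreBloch

section Deltas

variable (F : Type u) [Field F]

/-- `d` is the differential `δ₂ : B₂(F) → Λ² F^×`, `{x}₂ ↦ x ∧ (1-x)`. -/
def IsDelta2 (d : B2 F →ₗ[ℚ] ⋀[ℚ]^2 (UnitsQ F)) : Prop :=
  ∀ x : F, x ≠ 0 → x ≠ 1 → d (B2.gen x) = wedgeF 2 ![x, 1 - x]

/-- `d` is the differential `δ₃ : B₂(F) ⊗ F^× → Λ³ F^×`, `{x}₂ ⊗ y ↦ x ∧ (1-x) ∧ y`. -/
def IsDelta3 (d : B2 F ⊗[ℚ] UnitsQ F →ₗ[ℚ] ⋀[ℚ]^3 (UnitsQ F)) : Prop :=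
  ∀ x y : F, x ≠ 0 → x ≠ 1 → y ≠ 0 →
    d (B2.gen x ⊗ₜ mkQ y) = wedgeF 3 ![x, 1 - x, y]

/-- `d` is the differential `δ₄ : B₂(F) ⊗ Λ² F^× → Λ⁴ F^×`,
`{x}₂ ⊗ (y ∧ z) ↦ x ∧ (1-x) ∧ y ∧ z`. -/
def IsDelta4 (d : B2 F ⊗[ℚ] (⋀[ℚ]^2 (UnitsQ F)) →ₗ[ℚ] ⋀[ℚ]^4 (UnitsQ F)) : Prop :=
  ∀ x y z : F, x ≠ 0 → x ≠ 1 → y ≠ 0 → z ≠ 0 →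
    d (B2.gen x ⊗ₜ wedgeF 2 ![y, z]) = wedgeF 4 ![x, 1 - x, y, z]

end Deltas

section Valuations

variable {F K : Type u} [Field F] [Field K]

/-- `ν` is (the additive form of) a discrete valuation on `F`:
a surjection onto `ℤ` defined on `F ∖ {0}`, multiplicative, and
satisfying the ultrametric inequality. -/
structure IsDVal (ν : F → ℤ) : Prop where
  map_mul : ∀ x y : F, x ≠ 0 → y ≠ 0 → ν (x * y) = ν x + ν y
  map_add : ∀ x y : F, x ≠ 0 → y ≠ 0 → x + y ≠ 0 → min (ν x) (ν y) ≤ ν (x + y)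
  surj : ∀ n : ℤ, ∃ x : F, x ≠ 0 ∧ ν x = n

/-- `res : F → K` realizes `K` as the residue field of the discrete valuation `ν`:
it is a surjective ring homomorphism on the valuation ring `O_ν` with kernel the
maximal ideal `m_ν` (and arbitrary elsewhere). -/
structure IsResidue (ν : F → ℤ) (res : F → K) : Prop where
  map_one : res 1 = 1
  map_add : ∀ x y : F, (x = 0 ∨ 0 ≤ ν x) → (y = 0 ∨ 0 ≤ ν y) →
    res (x + y) = res x + res y
  map_mul : ∀ x y : F, (x = 0 ∨ 0 ≤ ν x) → (y = 0 ∨ 0 ≤ ν y) →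
    res (x * y) = res x * res y
  zero_iff : ∀ x : F, (x = 0 ∨ 0 ≤ ν x) → (res x = 0 ↔ (x = 0 ∨ 0 < ν x))
  surj : ∀ z : K, ∃ x : F, (x = 0 ∨ 0 ≤ ν x) ∧ res x = z

/-- `D` is the tame symbol `∂_ν^{(n+1)} : Λ^{n+1} F^× → Λ^n K^×` attached to the discrete
valuation `ν` with residue field `K` (via `res`): it is characterized by
`∂(π ∧ u₂ ∧ ⋯ ∧ u_{n+1}) = ū₂ ∧ ⋯ ∧ ū_{n+1}` for a uniformizer `π` and units `uᵢ`. -/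
def IsTame (ν : F → ℤ) (res : F → K) (n : ℕ)
    (D : ⋀[ℚ]^(n + 1) (UnitsQ F) →ₗ[ℚ] ⋀[ℚ]^n (UnitsQ K)) : Prop :=
  ∀ (π : F) (u : Fin n → F), π ≠ 0 → ν π = 1 → (∀ i, u i ≠ 0 ∧ ν (u i) = 0) →
    D (wedgeF (n + 1) (Fin.cons π u)) = wedgeF n (fun i => res (u i))

/-- `D` is the tame symbol `∂_ν^{(2)} : Λ² F^× → K^×`, with target the residue field itself. -/
def IsTame2U (ν : F → ℤ) (res : F → K) (D : ⋀[ℚ]^2 (UnitsQ F) →ₗ[ℚ] UnitsQ K) : Prop :=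
  ∀ π u : F, π ≠ 0 → ν π = 1 → u ≠ 0 → ν u = 0 → D (wedgeF 2 ![π, u]) = mkQ (res u)

/-- `D` is the tame symbol `∂_ν : B₂(F) ⊗ F^× → B₂(K)`. -/
def IsTameB1 (ν : F → ℤ) (res : F → K)
    (D : B2 F ⊗[ℚ] UnitsQ F →ₗ[ℚ] B2 K) : Prop :=
  (∀ a b : F, a ≠ 0 → a ≠ 1 → ν a ≠ 0 → b ≠ 0 → D (B2.gen a ⊗ₜ mkQ b) = 0) ∧
  (∀ u b : F, u ≠ 0 → ν u = 0 → b ≠ 0 →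
    D (B2.gen u ⊗ₜ mkQ b) = -((ν b : ℚ) • B2.gen (res u)))

/-- `D` is the tame symbol `∂_ν : B₂(F) ⊗ Λ² F^× → B₂(K) ⊗ K^×`, where `D2` is the tame
symbol `∂_ν^{(2)}`. -/
def IsTameB2 (ν : F → ℤ) (res : F → K) (D2 : ⋀[ℚ]^2 (UnitsQ F) →ₗ[ℚ] UnitsQ K)
    (D : B2 F ⊗[ℚ] (⋀[ℚ]^2 (UnitsQ F)) →ₗ[ℚ] B2 K ⊗[ℚ] UnitsQ K) : Prop :=
  (∀ (a : F) (b : ⋀[ℚ]^2 (UnitsQ F)), a ≠ 0 → a ≠ 1 → ν a ≠ 0 → D (B2.gen a ⊗ₜ b) = 0) ∧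
  (∀ (u : F) (b : ⋀[ℚ]^2 (UnitsQ F)), u ≠ 0 → ν u = 0 →
    D (B2.gen u ⊗ₜ b) = -(B2.gen (res u) ⊗ₜ D2 b))

/-- `D` is the tame symbol `∂_ν : B₂(F) ⊗ Λ^{n+1} F^× → B₂(K) ⊗ Λ^n K^×`, where `Dn` is
the tame symbol `∂_ν^{(n+1)}`. -/
def IsTameBGen (ν : F → ℤ) (res : F → K) (n : ℕ)
    (Dn : ⋀[ℚ]^(n + 1) (UnitsQ F) →ₗ[ℚ] ⋀[ℚ]^n (UnitsQ K))
    (D : B2 F ⊗[ℚ] (⋀[ℚ]^(n + 1) (UnitsQ F)) →ₗ[ℚ] B2 K ⊗[ℚ] (⋀[ℚ]^n (UnitsQ K))) : Prop :=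
  (∀ (a : F) (b : ⋀[ℚ]^(n + 1) (UnitsQ F)), a ≠ 0 → a ≠ 1 → ν a ≠ 0 →
    D (B2.gen a ⊗ₜ b) = 0) ∧
  (∀ (u : F) (b : ⋀[ℚ]^(n + 1) (UnitsQ F)), u ≠ 0 → ν u = 0 →
    D (B2.gen u ⊗ₜ b) = -(B2.gen (res u) ⊗ₜ Dn b))

end Valuations

section Fields

variable (k F : Type u) [Field k] [Field F] [Algebra k F]

/-- `F` is a finitely generated extension of `k` of transcendence degree `1`. -/
def IsFields1 : Prop :=
  (∃ s : Finset F, IntermediateField.adjoin k (s : Set F) = ⊤) ∧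
  ∃ x : F, Transcendental k x ∧
    Algebra.IsAlgebraic (IntermediateField.adjoin k {x}) F

/-- `F` is a finitely generated extension of `k` of transcendence degree `2`. -/
def IsFields2 : Prop :=
  (∃ s : Finset F, IntermediateField.adjoin k (s : Set F) = ⊤) ∧
  ∃ x y : F, AlgebraicIndependent k ![x, y] ∧
    Algebra.IsAlgebraic (IntermediateField.adjoin k {x, y}) F

/-- `res : F → k` is the canonical residue map of `ν` onto `k`
(restricting to the identity on `k`). -/
def GoodResK (ν : F → ℤ) (res : F → k) : Prop :=
  IsResidue ν res ∧ ∀ c : k, res (algebraMap k F c) = c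

/-- The set `val(F)` of discrete valuations of `F` trivial on `k` with residue field `k`. -/
def ValInd : Type u :=
  {ν : F → ℤ // IsDVal ν ∧ (∀ c : k, c ≠ 0 → ν (algebraMap k F c) = 0) ∧
    ∃ res : F → k, GoodResK k F ν res}

/-- `h : Λ³ F^× → B₂(k)` is a lifted reciprocity map on `F ∈ Fields₁`:
(1) `-δ₂(h a) = Σ_{ν ∈ val(F)} ∂_ν^{(3)} a`;
(2) `h (δ₃ c) = Σ_{ν ∈ val(F)} ∂_ν c`;
(3) `h` vanishes on the image of `Λ² F^× ⊗ k^× → Λ³ F^×`. -/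
def IsLiftedRec (h : ⋀[ℚ]^3 (UnitsQ F) →ₗ[ℚ] B2 k) : Prop :=
  (∀ d2 : B2 k →ₗ[ℚ] ⋀[ℚ]^2 (UnitsQ k), IsDelta2 k d2 →
    ∀ res : ∀ _ : ValInd k F, F → k, (∀ v : ValInd k F, GoodResK k F v.1 (res v)) →
    ∀ D : ∀ _ : ValInd k F, ⋀[ℚ]^3 (UnitsQ F) →ₗ[ℚ] ⋀[ℚ]^2 (UnitsQ k),
      (∀ v : ValInd k F, IsTame v.1 (res v) 2 (D v)) →
    ∀ a : ⋀[ℚ]^3 (UnitsQ F), -(d2 (h a)) = ∑ᶠ v : ValInd k F, D v a) ∧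
  (∀ d3 : B2 F ⊗[ℚ] UnitsQ F →ₗ[ℚ] ⋀[ℚ]^3 (UnitsQ F), IsDelta3 F d3 →
    ∀ res : ∀ _ : ValInd k F, F → k, (∀ v : ValInd k F, GoodResK k F v.1 (res v)) →
    ∀ DB : ∀ _ : ValInd k F, B2 F ⊗[ℚ] UnitsQ F →ₗ[ℚ] B2 k,
      (∀ v : ValInd k F, IsTameB1 v.1 (res v) (DB v)) →
    ∀ c : B2 F ⊗[ℚ] UnitsQ F, h (d3 c) = ∑ᶠ v : ValInd k F, DB v c) ∧
  (∀ (y z : F) (c : k), y ≠ 0 → z ≠ 0 → c ≠ 0 →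
    h (wedgeF 3 ![y, z, algebraMap k F c]) = 0)

end Fields

/-- The degree `[K : j(F)]` of a field embedding. -/
noncomputable def fieldDeg {F K : Type u} [Field F] [Field K] (j : F →+* K) : ℕ :=
  letI : Algebra F K := j.toAlgebra
  Module.finrank F K

/-- The pullback `j^* h = (1/[F₂ : j(F₁)]) · h ∘ j_*` of a lifted reciprocity map. -/
noncomputable def pullRec (k F₁ F₂ : Type u) [Field k] [Field F₁] [Field F₂]
    (j : F₁ →+* F₂) (h : ⋀[ℚ]^3 (UnitsQ F₂) →ₗ[ℚ] B2 k) :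
    ⋀[ℚ]^3 (UnitsQ F₁) →ₗ[ℚ] B2 k :=
  ((fieldDeg j : ℚ))⁻¹ • (h ∘ₗ powMap 3 (unitsQMap j))

end ChowPrelim

noncomputable section ChowPrelim2

universe u

open scoped TensorProduct

/-- The monic irreducible polynomials over `F`, indexing the closed points of `𝔸¹_F`,
i.e. the general discrete valuations of `F(t)`. -/
def MonicIrr (F : Type u) [Field F] : Type u :=
  {p : Polynomial F // p.Monic ∧ Irreducible p}

/-- The residue field `F(p) = F[t]/(p)` of the valuation attached to a monic irreducible
polynomial `p`. -/
def ResField {F : Type u} [Field F] (p : MonicIrr F) : Type u := AdjoinRoot p.1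

noncomputable instance ResField.instField {F : Type u} [Field F] (p : MonicIrr F) :
    Field (ResField p) :=
  letI : Fact (Irreducible p.1) := ⟨p.2.2⟩
  inferInstanceAs (Field (AdjoinRoot p.1))

/-- `ν` is the discrete valuation of `F(t)` attached to the monic irreducible polynomial `p`. -/
def IsNuP {F : Type u} [Field F] (p : MonicIrr F) (ν : RatFunc F → ℤ) : Prop :=
  IsDVal ν ∧ ν (algebraMap (Polynomial F) (RatFunc F) p.1) = 1 ∧
    ∀ g : Polynomial F, g ≠ 0 → ¬(p.1 ∣ g) →
      ν (algebraMap (Polynomial F) (RatFunc F) g) = 0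

/-- `res` is the canonical residue map `F(t) → F(p)` of the valuation attached to `p`. -/
def IsResP {F : Type u} [Field F] (p : MonicIrr F) (ν : RatFunc F → ℤ)
    (res : RatFunc F → ResField p) : Prop :=
  IsResidue ν res ∧ ∀ g : Polynomial F,
    res (algebraMap (Polynomial F) (RatFunc F) g) =
      (AdjoinRoot.mk p.1 g : AdjoinRoot p.1)

/-- Bundled realization of the residue field of a discrete valuation `ν` on `L`
(trivial on `k`): a field `R` with a `k`-algebra structure together with the residue map. -/
structure ResData (k L : Type u) [Field k] [Field L] [Algebra k L] (ν : L → ℤ) :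
    Type (u + 1) where
  R : Type u
  [fieldR : Field R]
  [algR : Algebra k R]
  res : L → R
  isRes : IsResidue ν res
  compat : ∀ c : k, res (algebraMap k L c) = algebraMap k R c

attribute [instance] ResData.fieldR ResData.algR

/-- The set `dval(L)` of divisorial valuations of `L ∈ Fields₂`: discrete valuations trivial
on `k` whose residue field is a finitely generated extension of `k` of transcendence
degree `1`. -/
def DValInd (k L : Type u) [Field k] [Field L] [Algebra k L] : Type u :=
  {ν : L → ℤ // IsDVal ν ∧ (∀ c : k, c ≠ 0 → ν (algebraMap k L c) = 0) ∧
    ∃ rd : ResData k L ν, IsFields1 k rd.R}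

/-- A height-one prime ideal (in a domain). -/
def IsHeightOne {R : Type u} [CommRing R] (p : Ideal R) : Prop :=
  p.IsPrime ∧ p ≠ ⊥ ∧ ∀ q : Ideal R, q.IsPrime → q < p → q = ⊥

/-- `R/p` is regular, i.e. (for a one-dimensional local ring) the maximal ideal of `R/p`
is principal. -/
def QuotRegular {R : Type u} [CommRing R] [IsLocalRing R] (p : Ideal R) : Prop :=
  ∃ t : R, Ideal.map (Ideal.Quotient.mk p) (IsLocalRing.maximalIdeal R) =
    Ideal.span {Ideal.Quotient.mk p t}

/-- The height-one primes `p` of `R` with `R/p` regular. -/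
def RegPrimes (R : Type u) [CommRing R] [IsLocalRing R] : Type u :=
  {p : Ideal R // IsHeightOne p ∧ QuotRegular p}

instance RegPrimes.isPrime {R : Type u} [CommRing R] [IsLocalRing R] (p : RegPrimes R) :
    p.1.IsPrime := p.2.1.1

/-- The residue field `κ(p) = Frac(R/p)` of a prime `p`. -/
def ResFieldP {R : Type u} [CommRing R] [IsLocalRing R] [IsDomain R] (p : RegPrimes R) :
    Type u := FractionRing (R ⧸ p.1)

noncomputable instance ResFieldP.instField {R : Type u} [CommRing R] [IsLocalRing R]
    [IsDomain R] (p : RegPrimes R) : Field (ResFieldP p) :=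
  inferInstanceAs (Field (FractionRing (R ⧸ p.1)))

/-- `ν` is the discrete valuation `ν_p` of `L = Frac R` attached to a height-one prime `p`:
it is nonnegative on `R` and positive exactly on `p`. -/
def IsNuPrime {R L : Type u} [CommRing R] [Field L] [Algebra R L] (p : Ideal R)
    (ν : L → ℤ) : Prop :=
  IsDVal ν ∧ (∀ x : R, x ≠ 0 → 0 ≤ ν (algebraMap R L x)) ∧
    ∀ x : R, x ≠ 0 → (x ∈ p ↔ 0 < ν (algebraMap R L x))

/-- `res` is the canonical residue map `L → κ(p)` of the valuation `ν_p`. -/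
def IsResPrime {R L : Type u} [CommRing R] [IsLocalRing R] [IsDomain R] [Field L]
    [Algebra R L] (p : RegPrimes R) (ν : L → ℤ) (res : L → ResFieldP p) : Prop :=
  IsResidue ν res ∧ ∀ x : R,
    res (algebraMap R L x) =
      algebraMap (R ⧸ p.1) (FractionRing (R ⧸ p.1)) (Ideal.Quotient.mk p.1 x)

/-- `ν̄` is the discrete valuation of `κ(p)` attached to the discrete valuation ring `R/p`:
nonnegative on `R/p` and positive exactly on the image of the maximal ideal of `R`. -/
def IsNuBar {R : Type u} [CommRing R] [IsLocalRing R] [IsDomain R] (p : RegPrimes R)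
    (ν : ResFieldP p → ℤ) : Prop :=
  IsDVal ν ∧
  (∀ x : R ⧸ p.1, x ≠ 0 →
    0 ≤ ν (algebraMap (R ⧸ p.1) (FractionRing (R ⧸ p.1)) x)) ∧
  ∀ x : R, Ideal.Quotient.mk p.1 x ≠ 0 →
    (x ∈ IsLocalRing.maximalIdeal R ↔
      0 < ν (algebraMap (R ⧸ p.1) (FractionRing (R ⧸ p.1)) (Ideal.Quotient.mk p.1 x)))

/-- `res` is the canonical residue map `κ(p) → k` of the valuation `ν̄_p`
(restricting to the identity on `k`). -/
def IsResBar {k R : Type u} [Field k] [CommRing R] [IsLocalRing R] [IsDomain R]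
    [Algebra k R] (p : RegPrimes R) (ν : ResFieldP p → ℤ) (res : ResFieldP p → k) : Prop :=
  IsResidue ν res ∧ ∀ c : k,
    res (algebraMap (R ⧸ p.1) (FractionRing (R ⧸ p.1))
      (Ideal.Quotient.mk p.1 (algebraMap k R c))) = c

/-- The Steinberg relations subspace of `Λ^n F^×` (with ℚ-coefficients). -/
def MilnorRel (F : Type u) [Field F] : (n : ℕ) → Submodule ℚ (⋀[ℚ]^n (UnitsQ F))
  | 0 => ⊥
  | 1 => ⊥
  | (m + 2) => Submodule.span ℚ
      {x | ∃ (a : F) (v : Fin m → F), a ≠ 0 ∧ a ≠ 1 ∧ (∀ i, v i ≠ 0) ∧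
        x = wedgeF (m + 2) (Fin.cons a (Fin.cons (1 - a) v))}

/-- The rational Milnor K-group `K_n^M(F) ⊗ ℚ`: the quotient of `Λ^n F^×` by the
Steinberg relations. -/
def MilnorQ (F : Type u) [Field F] (n : ℕ) : Type u :=
  (⋀[ℚ]^n (UnitsQ F)) ⧸ MilnorRel F n

noncomputable instance MilnorQ.instAddCommGroup (F : Type u) [Field F] (n : ℕ) :
    AddCommGroup (MilnorQ F n) :=
  inferInstanceAs (AddCommGroup ((⋀[ℚ]^n (UnitsQ F)) ⧸ MilnorRel F n))

noncomputable instance MilnorQ.instModule (F : Type u) [Field F] (n : ℕ) :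
    Module ℚ (MilnorQ F n) :=
  inferInstanceAs (Module ℚ ((⋀[ℚ]^n (UnitsQ F)) ⧸ MilnorRel F n))

/-- The class of an element of `Λ^n F^×` in `K_n^M(F) ⊗ ℚ`. -/
def MilnorQ.mk {F : Type u} [Field F] {n : ℕ} (x : ⋀[ℚ]^n (UnitsQ F)) : MilnorQ F n :=
  Submodule.Quotient.mk x

end ChowPrelim2

open scoped TensorProduct

universe u

/-!
By Krull's height theorem `σ` avoids some minimal prime `q` of `(π)`, for `{π, σ}` a regular system
of parameters. If `aπ + bσ ∈ q` then `b ∈ q`, so `q = (π) + σq`, and Nakayama's lemma gives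
`q = (π)`. Hence `(π₁)` and `(π₂)` are height-one primes with regular quotient, and they are the
only ones containing `π₁` or `π₂`; at any other prime all three entries of the symbol are units and
its residue vanishes.

At `(π₁)` the first residue vanishes unless `n = 0`, and then the second one vanishes unless
`m = 0`. When `n = m = 0` the tame symbol of `π₁^a₃ u ∧ π₁^a₄ v` is `a₃ • v̄ - a₄ • ū`, where `ū`
and `v̄` have valuation `b₃` and `b₄`, so the double residue is `(a₃ b₄ - a₄ b₃) • {ξ̄₁}₂`. The
contribution of `(π₂)` is obtained by exchanging the roles of `a` and `b`, hence is the opposite.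
-/

section Valuations

variable {F K : Type u} [Field F] [Field K] {ν : F → ℤ} {res : F → K}

theorem IsDVal.map_one (hν : IsDVal ν) : ν 1 = 0 := by
  simpa using hν.map_mul 1 1 one_ne_zero one_ne_zero

theorem IsDVal.map_inv (hν : IsDVal ν) {x : F} (hx : x ≠ 0) : ν x⁻¹ = -ν x := by
  have hmul := hν.map_mul x x⁻¹ hx (inv_ne_zero hx)
  rw [mul_inv_cancel₀ hx, hν.map_one] at hmul
  exact (neg_eq_of_add_eq_zero_right hmul.symm).symm

theorem IsDVal.map_zpow (hν : IsDVal ν) {x : F} (hx : x ≠ 0) (i : ℤ) : ν (x ^ i) = i * ν x := by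
  induction i with
  | zero => rw [zpow_zero, hν.map_one, zero_mul]
  | succ i ih => rw [zpow_add_one₀ hx, hν.map_mul _ _ (zpow_ne_zero _ hx) hx, ih]; ring
  | pred i ih =>
    rw [zpow_sub_one₀ hx, hν.map_mul _ _ (zpow_ne_zero _ hx) (inv_ne_zero hx), ih, hν.map_inv hx]
    ring

theorem IsDVal.ne_one_of_apply_ne_zero (hν : IsDVal ν) {x : F} (hx : ν x ≠ 0) : x ≠ 1 :=
  fun h => hx (h ▸ hν.map_one)

theorem IsResidue.apply_ne_zero (hres : IsResidue ν res) {x : F} (hx : x ≠ 0) (hνx : ν x = 0) :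
    res x ≠ 0 := by
  rw [Ne, hres.zero_iff x (.inr hνx.ge), hνx]
  simpa using hx

theorem IsResidue.map_inv (hres : IsResidue ν res) (hν : IsDVal ν) {x : F} (hx : x ≠ 0)
    (hνx : ν x = 0) : res x⁻¹ = (res x)⁻¹ := by
  have hmul := hres.map_mul x x⁻¹ (.inr hνx.ge) (.inr (by rw [hν.map_inv hx, hνx, neg_zero]))
  rw [mul_inv_cancel₀ hx, hres.map_one] at hmul
  exact eq_inv_of_mul_eq_one_right hmul.symm

theorem IsResidue.map_zpow (hres : IsResidue ν res) (hν : IsDVal ν) {x : F} (hx : x ≠ 0)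
    (hνx : ν x = 0) (i : ℤ) : res (x ^ i) = res x ^ i := by
  have hpow (j : ℤ) : x ^ j = 0 ∨ 0 ≤ ν (x ^ j) := .inr (by rw [hν.map_zpow hx, hνx, mul_zero])
  have hinv : x⁻¹ = 0 ∨ 0 ≤ ν x⁻¹ := .inr (by rw [hν.map_inv hx, hνx, neg_zero])
  have hres_ne := hres.apply_ne_zero hx hνx
  induction i with
  | zero => rw [zpow_zero, zpow_zero, hres.map_one]
  | succ i ih =>
    rw [zpow_add_one₀ hx, zpow_add_one₀ hres_ne, hres.map_mul _ _ (hpow _) (.inr hνx.ge), ih]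
  | pred i ih =>
    rw [zpow_sub_one₀ hx, zpow_sub_one₀ hres_ne, hres.map_mul _ _ (hpow _) hinv, ih,
      hres.map_inv hν hx hνx]

end Valuations

section Wedge

variable {F : Type u} [Field F]

theorem mkQ_of_ne_zero {x : F} (hx : x ≠ 0) :
    mkQ x = (1 : ℚ) ⊗ₜ[ℤ] Additive.ofMul (Units.mk0 x hx) :=
  dif_neg hx

theorem mkQ_mul {x y : F} (hx : x ≠ 0) (hy : y ≠ 0) : mkQ (x * y) = mkQ x + mkQ y := by
  rw [mkQ_of_ne_zero hx, mkQ_of_ne_zero hy, mkQ_of_ne_zero (mul_ne_zero hx hy), Units.mk0_mul,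
    ofMul_mul, TensorProduct.tmul_add]

theorem mkQ_zpow {x : F} (hx : x ≠ 0) (i : ℤ) : mkQ (x ^ i) = (i : ℚ) • mkQ x := by
  have hunit : Units.mk0 (x ^ i) (zpow_ne_zero i hx) = Units.mk0 x hx ^ i := by ext; simp
  rw [mkQ_of_ne_zero hx, mkQ_of_ne_zero (zpow_ne_zero i hx), hunit, ofMul_zpow,
    Int.cast_smul_eq_zsmul]
  exact map_zsmul (TensorProduct.mk ℤ ℚ (Additive Fˣ) 1) i _

theorem wedgeF_two_eq_ιMulti (x y : F) :
    wedgeF 2 ![x, y] = exteriorPower.ιMulti ℚ 2 ![mkQ x, mkQ y] := by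
  refine Subtype.ext (congrArg (ExteriorAlgebra.ιMulti ℚ 2) (funext fun i => ?_))
  fin_cases i <;> rfl

theorem alternatingMap_pair_swap {S M N : Type*} [CommRing S] [AddCommGroup M] [Module S M]
    [AddCommGroup N] [Module S N] (A : M [⋀^Fin 2]→ₗ[S] N) (x y : M) :
    A ![y, x] = -A ![x, y] := by
  rw [← A.map_swap ![x, y] zero_ne_one]
  congr 1
  ext i
  fin_cases i <;> rfl

theorem alternatingMap_pair_smul_add {S M N : Type*} [CommRing S] [AddCommGroup M] [Module S M]
    [AddCommGroup N] [Module S N] (A : M [⋀^Fin 2]→ₗ[S] N) (x y z : M) (a b : S) :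
    A ![a • x + y, b • x + z] = a • A ![x, z] - b • A ![x, y] + A ![y, z] := by
  have hleft (c : S) (v w : M) : A ![c • x + v, w] = c • A ![x, w] + A ![v, w] := by
    rw [A.map_vecCons_add, A.map_vecCons_smul]
  have hright (v : M) : A ![v, b • x + z] = A ![v, z] - b • A ![x, v] := by
    rw [alternatingMap_pair_swap, hleft, alternatingMap_pair_swap A v z]
    module
  have hself : A ![x, x] = 0 := A.map_eq_zero_of_eq _ (i := 0) (j := 1) rfl zero_ne_one
  rw [hleft, hright, hright, hself]
  module

end Wedge

section TameSymbols

variable {F K : Type u} [Field F] [Field K] {ν : F → ℤ} {res : F → K}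
  {D : ⋀[ℚ]^2 (UnitsQ F) →ₗ[ℚ] UnitsQ K}

theorem IsTame2U.apply_zpow_mul_zpow_mul (hD : IsTame2U ν res D) (hν : IsDVal ν) {π u v : F}
    (hπ : π ≠ 0) (hνπ : ν π = 1) (hu : u ≠ 0) (hνu : ν u = 0) (hv : v ≠ 0) (hνv : ν v = 0)
    (a b : ℤ) :
    D (wedgeF 2 ![π ^ a * u, π ^ b * v]) = (a : ℚ) • mkQ (res v) - (b : ℚ) • mkQ (res u) := by
  have hexpand (a b : ℤ) : D (wedgeF 2 ![π ^ a * u, π ^ b * v]) =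
      (a : ℚ) • mkQ (res v) - (b : ℚ) • mkQ (res u) + D (wedgeF 2 ![u, v]) := by
    rw [← hD π v hπ hνπ hv hνv, ← hD π u hπ hνπ hu hνu]
    simp only [wedgeF_two_eq_ιMulti, mkQ_mul (zpow_ne_zero _ hπ) hu,
      mkQ_mul (zpow_ne_zero _ hπ) hv, mkQ_zpow hπ]
    exact alternatingMap_pair_smul_add (D.compAlternatingMap (exteriorPower.ιMulti ℚ 2)) ..
  -- `π` and `π * u` are both uniformizers, so their symbols with `v` coincide.
  have hunits : D (wedgeF 2 ![u, v]) = 0 := by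
    have hνπu : ν (π * u) = 1 := by rw [hν.map_mul _ _ hπ hu, hνπ, hνu, add_zero]
    simpa [hD (π * u) v (mul_ne_zero hπ hu) hνπu hv hνv] using hexpand 1 0
  rw [hexpand, hunits, add_zero]

variable {DB : B2 F ⊗[ℚ] (⋀[ℚ]^2 (UnitsQ F)) →ₗ[ℚ] B2 K ⊗[ℚ] UnitsQ K}

theorem IsTameB2.apply_units (hDB : IsTameB2 ν res D DB) (hD : IsTame2U ν res D) (hν : IsDVal ν)
    {w u v : F} (hw : w ≠ 0) (hνw : ν w = 0) (hu : u ≠ 0) (hνu : ν u = 0) (hv : v ≠ 0)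
    (hνv : ν v = 0) : DB (B2.gen w ⊗ₜ wedgeF 2 ![u, v]) = 0 := by
  obtain ⟨π, hπ, hνπ⟩ := hν.surj 1
  have htame := hD.apply_zpow_mul_zpow_mul hν hπ hνπ hu hνu hv hνv 0 0
  simp only [zpow_zero, one_mul, Int.cast_zero, zero_smul, sub_zero] at htame
  rw [hDB.2 w _ hw hνw, htame, TensorProduct.tmul_zero, neg_zero]

variable {k : Type u} [Field k] {νb : K → ℤ} {resb : K → k} {DB' : B2 K ⊗[ℚ] UnitsQ K →ₗ[ℚ] B2 k}

theorem IsTameB1.apply_gen_tmul (hDB' : IsTameB1 νb resb DB') (hνb : IsDVal νb) {x y : K}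
    (hx : x ≠ 0) (hy : y ≠ 0) :
    DB' (B2.gen x ⊗ₜ mkQ y) = if νb x = 0 then -((νb y : ℚ) • B2.gen (resb x)) else 0 := by
  split_ifs with hνx
  · exact hDB'.2 x y hx hνx hy
  · exact hDB'.1 x y hx (hνb.ne_one_of_apply_ne_zero hνx) hνx hy

theorem IsTameB1.apply_isTameB2 (hDB' : IsTameB1 νb resb DB') (hνb : IsDVal νb)
    (hDB : IsTameB2 ν res D DB) (hD : IsTame2U ν res D) (hν : IsDVal ν) (hres : IsResidue ν res)
    {π w u v : F} (hπ : π ≠ 0) (hνπ : ν π = 1) (hw : w ≠ 0) (hνw : ν w = 0)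
    (hu : u ≠ 0) (hνu : ν u = 0) (hv : v ≠ 0) (hνv : ν v = 0) (a b : ℤ) :
    DB' (DB (B2.gen w ⊗ₜ wedgeF 2 ![π ^ a * u, π ^ b * v])) =
      if νb (res w) = 0 then
        ((a : ℚ) * νb (res v) - b * νb (res u)) • B2.gen (resb (res w)) else 0 := by
  have hresw := hres.apply_ne_zero hw hνw
  rw [hDB.2 w _ hw hνw, hD.apply_zpow_mul_zpow_mul hν hπ hνπ hu hνu hv hνv, TensorProduct.tmul_sub,
    TensorProduct.tmul_smul, TensorProduct.tmul_smul, map_neg, map_sub, map_smul, map_smul,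
    hDB'.apply_gen_tmul hνb hresw (hres.apply_ne_zero hv hνv),
    hDB'.apply_gen_tmul hνb hresw (hres.apply_ne_zero hu hνu)]
  split_ifs
  · module
  · simp only [smul_zero, sub_zero, neg_zero]

end TameSymbols

section Parameters

open IsLocalRing

theorem isHeightOne_span_singleton {R : Type u} [CommRing R] [IsDomain R] [IsNoetherianRing R]
    {π : R} (hπ : π ≠ 0) (hprime : (Ideal.span {π}).IsPrime) : IsHeightOne (Ideal.span {π}) := by
  refine ⟨hprime, by simpa using hπ, fun q hq hlt => ?_⟩
  have hheight : q.height < 1 := (Ideal.height_strict_mono_of_isPrime_of_isPrime hlt).trans_le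
    (Ideal.height_span_singleton_le_one (Ideal.span_singleton_eq_top.not.1 hprime.ne_top))
  exact Ideal.height_eq_zero_iff_eq_bot.1 (Order.lt_one_iff.1 hheight)

variable {R : Type u} [CommRing R] [IsLocalRing R] {π σ : R}

theorem one_lt_height_maximalIdeal (hdim : 1 < ringKrullDim R) : 1 < (maximalIdeal R).height := by
  rwa [← maximalIdeal_height_eq_ringKrullDim, ← WithBot.coe_one, WithBot.coe_lt_coe] at hdim

theorem map_mk_maximalIdeal_of_span_pair (hπσ : Ideal.span {π, σ} = maximalIdeal R)
    {p : Ideal R} (hπp : π ∈ p) :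
    (maximalIdeal R).map (Ideal.Quotient.mk p) = Ideal.span {Ideal.Quotient.mk p σ} := by
  rw [← hπσ, Ideal.map_span, Set.image_pair, Ideal.Quotient.eq_zero_iff_mem.2 hπp,
    Ideal.span_insert_zero]

variable [IsNoetherianRing R]

theorem exists_isPrime_mem_notMem_of_span_pair (hdim : 1 < ringKrullDim R)
    (hπσ : Ideal.span {π, σ} = maximalIdeal R) :
    ∃ q : Ideal R, q.IsPrime ∧ π ∈ q ∧ σ ∉ q := by
  have hle : Ideal.span {π} ≤ maximalIdeal R := hπσ ▸ Ideal.span_mono (by simp)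
  obtain ⟨q, hq, hqm⟩ := Ideal.exists_minimalPrimes_le hle
  have hπq : π ∈ q := hq.1.2 (Ideal.mem_span_singleton_self π)
  refine ⟨q, hq.1.1, hπq, fun hσq => ?_⟩
  have hmq : maximalIdeal R = q :=
    le_antisymm (hπσ ▸ Ideal.span_le.2 (Set.pair_subset hπq hσq)) hqm
  rw [← hmq] at hq
  exact (Ideal.height_le_one_of_isPrincipal_of_mem_minimalPrimes _ _ hq).not_gt
    (one_lt_height_maximalIdeal hdim)

theorem eq_span_singleton_of_mem_of_notMem (hπσ : Ideal.span {π, σ} = maximalIdeal R)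
    {q : Ideal R} (hq : q.IsPrime) (hπq : π ∈ q) (hσq : σ ∉ q) : q = Ideal.span {π} := by
  refine le_antisymm ?_ ((Ideal.span_singleton_le_iff_mem q).2 hπq)
  refine Submodule.le_of_le_smul_of_le_jacobson_bot (IsNoetherian.noetherian q)
    (maximalIdeal_le_jacobson ⊥) fun x hx => ?_
  have hxm := le_maximalIdeal hq.ne_top hx
  rw [← hπσ, Ideal.mem_span_pair] at hxm
  obtain ⟨a, b, rfl⟩ := hxm
  have hbσ : b * σ ∈ q := (Ideal.add_mem_iff_right q (q.mul_mem_left a hπq)).1 hx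
  have hb : b ∈ q := (hq.mem_or_mem hbσ).resolve_right hσq
  have hσm : σ ∈ maximalIdeal R := hπσ ▸ Ideal.subset_span (by simp)
  refine Submodule.add_mem_sup (Ideal.mul_mem_left _ a (Ideal.mem_span_singleton_self π)) ?_
  rw [mul_comm]
  exact Submodule.smul_mem_smul hσm hb

theorem isPrime_span_singleton_of_span_pair (hdim : 1 < ringKrullDim R)
    (hπσ : Ideal.span {π, σ} = maximalIdeal R) : (Ideal.span {π}).IsPrime := by
  obtain ⟨q, hq, hπq, hσq⟩ := exists_isPrime_mem_notMem_of_span_pair hdim hπσ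
  exact eq_span_singleton_of_mem_of_notMem hπσ hq hπq hσq ▸ hq

theorem notMem_span_singleton_of_span_pair (hdim : 1 < ringKrullDim R)
    (hπσ : Ideal.span {π, σ} = maximalIdeal R) : σ ∉ Ideal.span {π} := by
  obtain ⟨q, hq, hπq, hσq⟩ := exists_isPrime_mem_notMem_of_span_pair hdim hπσ
  exact eq_span_singleton_of_mem_of_notMem hπσ hq hπq hσq ▸ hσq

theorem ne_zero_of_span_pair (hdim : 1 < ringKrullDim R)
    (hπσ : Ideal.span {π, σ} = maximalIdeal R) : π ≠ 0 := by
  rw [Set.pair_comm] at hπσ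
  rintro rfl
  exact notMem_span_singleton_of_span_pair hdim hπσ (zero_mem _)

/-- The height-one prime `(π)` of the regular system of parameters `π, σ`; its quotient is regular
because `σ` generates the maximal ideal modulo `π`. -/
def RegPrimes.ofParam [IsDomain R] (hdim : 1 < ringKrullDim R)
    (hπσ : Ideal.span {π, σ} = maximalIdeal R) : RegPrimes R :=
  ⟨Ideal.span {π}, isHeightOne_span_singleton (ne_zero_of_span_pair hdim hπσ)
    (isPrime_span_singleton_of_span_pair hdim hπσ), σ,
    map_mk_maximalIdeal_of_span_pair hπσ (Ideal.mem_span_singleton_self π)⟩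

theorem RegPrimes.eq_ofParam_of_mem [IsDomain R] (hdim : 1 < ringKrullDim R)
    (hπσ : Ideal.span {π, σ} = maximalIdeal R) {p : RegPrimes R} (hπp : π ∈ p.1) :
    p = RegPrimes.ofParam hdim hπσ := by
  have hle : Ideal.span {π} ≤ p.1 := (Ideal.span_singleton_le_iff_mem _).2 hπp
  refine Subtype.ext (eq_of_le_of_not_lt hle fun hlt => ?_).symm
  have hbot := p.2.1.2.2 _ (isPrime_span_singleton_of_span_pair hdim hπσ) hlt
  exact ne_zero_of_span_pair hdim hπσ (Ideal.span_singleton_eq_bot.1 hbot)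

theorem RegPrimes.ofParam_ne_ofParam_swap [IsDomain R] (hdim : 1 < ringKrullDim R)
    (hπσ : Ideal.span {π, σ} = maximalIdeal R) (hσπ : Ideal.span {σ, π} = maximalIdeal R) :
    RegPrimes.ofParam hdim hπσ ≠ RegPrimes.ofParam hdim hσπ := by
  intro heq
  have hspan : Ideal.span {π} = Ideal.span {σ} := congrArg Subtype.val heq
  exact notMem_span_singleton_of_span_pair hdim hπσ (hspan ▸ Ideal.mem_span_singleton_self σ)

end Parameters

section CenteredValuations

variable {A K : Type u} [CommRing A] [Field K] [Algebra A K] {p : Ideal A} {ν : K → ℤ}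

theorem IsNuPrime.apply_eq_zero_of_notMem (hν : IsNuPrime p ν) {x : A} (hx : x ∉ p) :
    ν (algebraMap A K x) = 0 := by
  have hx0 : x ≠ 0 := ne_of_mem_of_not_mem p.zero_mem hx |>.symm
  exact le_antisymm (not_lt.1 (mt (hν.2.2 x hx0).2 hx)) (hν.2.1 x hx0)

theorem IsNuPrime.ne_top [Nontrivial A] (hν : IsNuPrime p ν) : p ≠ ⊤ := by
  rw [Ideal.ne_top_iff_one, hν.2.2 1 one_ne_zero, map_one, hν.1.map_one]
  exact lt_irrefl 0

theorem IsNuPrime.apply_unit [Nontrivial A] (hν : IsNuPrime p ν) (ξ : Aˣ) :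
    ν (algebraMap A K ξ) = 0 :=
  hν.apply_eq_zero_of_notMem fun hξ => hν.ne_top (p.eq_top_of_isUnit_mem hξ ξ.isUnit)

variable [IsFractionRing A K]

theorem algebraMap_ne_zero {x : A} (hx : x ≠ 0) : algebraMap A K x ≠ 0 :=
  (map_ne_zero_iff _ (IsFractionRing.injective A K)).2 hx

variable [IsDomain A] [IsNoetherianRing A]

theorem IsNuPrime.apply_generator_dvd {t : A} (ht : t ≠ 0)
    (hν : IsNuPrime (Ideal.span {t}) ν) {x : A} (hx : x ≠ 0) :
    ν (algebraMap A K t) ∣ ν (algebraMap A K x) := by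
  have htu : ¬IsUnit t := Ideal.span_singleton_eq_top.not.1 hν.ne_top
  obtain ⟨c, hxc, htc⟩ :=
    (FiniteMultiplicity.of_not_isUnit htu hx).exists_eq_pow_mul_and_not_dvd
  have hc : c ≠ 0 := fun h => htc (h ▸ dvd_zero t)
  have hνc : ν (algebraMap A K c) = 0 :=
    hν.apply_eq_zero_of_notMem (Ideal.mem_span_singleton.not.2 htc)
  have ht' : algebraMap A K t ≠ 0 := algebraMap_ne_zero ht
  rw [hxc, map_mul, map_pow, hν.1.map_mul _ _ (pow_ne_zero _ ht') (algebraMap_ne_zero hc), hνc,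
    add_zero, ← zpow_natCast, hν.1.map_zpow ht']
  exact dvd_mul_left _ _

theorem IsNuPrime.apply_generator {t : A} (ht : t ≠ 0)
    (hν : IsNuPrime (Ideal.span {t}) ν) : ν (algebraMap A K t) = 1 := by
  obtain ⟨z, hz, hνz⟩ := hν.1.surj 1
  obtain ⟨x, y, _, rfl⟩ := IsFractionRing.div_surjective (A := A) z
  have hy' : algebraMap A K y ≠ 0 := (div_ne_zero_iff.1 hz).2
  have hx' : algebraMap A K x ≠ 0 := (div_ne_zero_iff.1 hz).1
  rw [div_eq_mul_inv, hν.1.map_mul _ _ hx' (inv_ne_zero hy'), hν.1.map_inv hy'] at hνz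
  refine Int.eq_one_of_dvd_one (hν.2.1 t ht) (hνz ▸ ?_)
  exact (hν.apply_generator_dvd ht (ne_zero_of_map hx')).add
    (hν.apply_generator_dvd ht (ne_zero_of_map hy')).neg_right

end CenteredValuations

section ParamMonomials

variable {R : Type u} [CommRing R]

/-- The element `x ^ i * y ^ j * ξ` of `L = Frac R`. When `x, y` is a regular system of parameters,
the strictly regular symbols are those whose entries are of this form. -/
def paramMonomial (L : Type u) [Field L] [Algebra R L] (x y : R) (i j : ℤ) (ξ : Rˣ) : L :=
  algebraMap R L x ^ i * algebraMap R L y ^ j * algebraMap R L ξ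

variable {L : Type u} [Field L] [Algebra R L]

theorem paramMonomial_swap (x y : R) (i j : ℤ) (ξ : Rˣ) :
    paramMonomial L x y i j ξ = paramMonomial L y x j i ξ := by
  unfold paramMonomial; ring

theorem paramMonomial_eq_zpow_mul (x y : R) (i j : ℤ) (ξ : Rˣ) :
    paramMonomial L x y i j ξ = algebraMap R L x ^ i * paramMonomial L x y 0 j ξ := by
  unfold paramMonomial; rw [zpow_zero]; ring

theorem paramMonomial_zero_zero (x y : R) (ξ : Rˣ) :
    paramMonomial L x y 0 0 ξ = algebraMap R L ξ := by
  unfold paramMonomial; simp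

variable [IsDomain R] [IsFractionRing R L] {x y : R}

theorem paramMonomial_ne_zero (hx : x ≠ 0) (hy : y ≠ 0) (i j : ℤ) (ξ : Rˣ) :
    paramMonomial L x y i j ξ ≠ 0 :=
  mul_ne_zero (mul_ne_zero (zpow_ne_zero _ (algebraMap_ne_zero hx))
    (zpow_ne_zero _ (algebraMap_ne_zero hy))) (algebraMap_ne_zero ξ.ne_zero)

theorem IsNuPrime.apply_paramMonomial {p : Ideal R} {ν : L → ℤ} (hν : IsNuPrime p ν) (hx : x ≠ 0)
    (hy : y ≠ 0) (i j : ℤ) (ξ : Rˣ) :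
    ν (paramMonomial L x y i j ξ) = i * ν (algebraMap R L x) + j * ν (algebraMap R L y) := by
  have hx' : algebraMap R L x ≠ 0 := algebraMap_ne_zero hx
  have hy' : algebraMap R L y ≠ 0 := algebraMap_ne_zero hy
  rw [paramMonomial, hν.1.map_mul _ _ (mul_ne_zero (zpow_ne_zero _ hx') (zpow_ne_zero _ hy'))
    (algebraMap_ne_zero ξ.ne_zero), hν.1.map_mul _ _ (zpow_ne_zero _ hx') (zpow_ne_zero _ hy'),
    hν.1.map_zpow hx', hν.1.map_zpow hy', hν.apply_unit, add_zero]

theorem IsTameB2.apply_paramMonomial_of_notMem {K : Type u} [Field K] {p : Ideal R} {ν : L → ℤ}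
    (hν : IsNuPrime p ν) {res : L → K} {D : ⋀[ℚ]^2 (UnitsQ L) →ₗ[ℚ] UnitsQ K}
    (hD : IsTame2U ν res D) {DB : B2 L ⊗[ℚ] (⋀[ℚ]^2 (UnitsQ L)) →ₗ[ℚ] B2 K ⊗[ℚ] UnitsQ K}
    (hDB : IsTameB2 ν res D DB) (hx : x ∉ p) (hy : y ∉ p) (n m a₃ b₃ a₄ b₄ : ℤ) (ξ₁ ξ₃ ξ₄ : Rˣ) :
    DB (B2.gen (paramMonomial L x y n m ξ₁) ⊗ₜ
      wedgeF 2 ![paramMonomial L x y a₃ b₃ ξ₃, paramMonomial L x y a₄ b₄ ξ₄]) = 0 := by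
  have hx0 : x ≠ 0 := ne_of_mem_of_not_mem p.zero_mem hx |>.symm
  have hy0 : y ≠ 0 := ne_of_mem_of_not_mem p.zero_mem hy |>.symm
  have hne (i j : ℤ) (ξ : Rˣ) : paramMonomial L x y i j ξ ≠ 0 := paramMonomial_ne_zero hx0 hy0 i j ξ
  have hval (i j : ℤ) (ξ : Rˣ) : ν (paramMonomial L x y i j ξ) = 0 := by
    rw [hν.apply_paramMonomial hx0 hy0, hν.apply_eq_zero_of_notMem hx,
      hν.apply_eq_zero_of_notMem hy, mul_zero, mul_zero, add_zero]
  exact hDB.apply_units hD hν.1 (hne _ _ _) (hval _ _ _) (hne _ _ _) (hval _ _ _)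
    (hne _ _ _) (hval _ _ _)

end ParamMonomials

section ResidueFields

open IsLocalRing

variable {R : Type u} [CommRing R] [IsDomain R] [IsLocalRing R] {p : RegPrimes R}

instance ResFieldP.instAlgebra (p : RegPrimes R) : Algebra (R ⧸ p.1) (ResFieldP p) :=
  inferInstanceAs (Algebra (R ⧸ p.1) (FractionRing (R ⧸ p.1)))

instance ResFieldP.instIsFractionRing (p : RegPrimes R) :
    IsFractionRing (R ⧸ p.1) (ResFieldP p) :=
  inferInstanceAs (IsFractionRing (R ⧸ p.1) (FractionRing (R ⧸ p.1)))

theorem IsResPrime.apply_algebraMap {L : Type u} [Field L] [Algebra R L] {ν : L → ℤ}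
    {res : L → ResFieldP p} (hres : IsResPrime p ν res) (x : R) :
    res (algebraMap R L x) = algebraMap (R ⧸ p.1) (ResFieldP p) (Ideal.Quotient.mk p.1 x) :=
  hres.2 x

variable {νb : ResFieldP p → ℤ}

theorem IsNuBar.isNuPrime (hνb : IsNuBar p νb) :
    IsNuPrime ((maximalIdeal R).map (Ideal.Quotient.mk p.1)) νb := by
  refine ⟨hνb.1, hνb.2.1, fun x hx => ?_⟩
  obtain ⟨x, rfl⟩ := Ideal.Quotient.mk_surjective x
  rw [Ideal.mem_quotient_iff_mem (le_maximalIdeal p.isPrime.ne_top)]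
  exact hνb.2.2 x hx

theorem IsNuBar.apply_generator [IsNoetherianRing R] (hνb : IsNuBar p νb) {π σ : R}
    (hπσ : Ideal.span {π, σ} = maximalIdeal R) (hπp : π ∈ p.1) (hσp : σ ∉ p.1) :
    νb (algebraMap (R ⧸ p.1) (ResFieldP p) (Ideal.Quotient.mk p.1 σ)) = 1 := by
  have hνσ := hνb.isNuPrime
  rw [map_mk_maximalIdeal_of_span_pair hπσ hπp] at hνσ
  exact hνσ.apply_generator (Ideal.Quotient.eq_zero_iff_mem.not.2 hσp)

theorem IsResBar.apply_mk_eq_iff {k : Type u} [Field k] [Algebra k R] {resb : ResFieldP p → k}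
    (hresb : IsResBar p νb resb) (hνb : IsNuBar p νb) (x : R) (c : k) :
    resb (algebraMap (R ⧸ p.1) (ResFieldP p) (Ideal.Quotient.mk p.1 x)) = c ↔
      x - algebraMap k R c ∈ maximalIdeal R := by
  let f : R →+* ResFieldP p := (algebraMap (R ⧸ p.1) (ResFieldP p)).comp (Ideal.Quotient.mk p.1)
  have hf (y : R) : f y = 0 ↔ Ideal.Quotient.mk p.1 y = 0 :=
    map_eq_zero_iff _ (IsFractionRing.injective (R ⧸ p.1) (ResFieldP p))
  have hnonneg (y : R) : f y = 0 ∨ 0 ≤ νb (f y) :=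
    (em (Ideal.Quotient.mk p.1 y = 0)).imp (hf y).2 (hνb.2.1 _)
  have hzero (y : R) : resb (f y) = 0 ↔ y ∈ maximalIdeal R := by
    rw [hresb.1.zero_iff _ (hnonneg y), hf]
    by_cases hy : Ideal.Quotient.mk p.1 y = 0
    · simpa [hy] using le_maximalIdeal p.isPrime.ne_top (Ideal.Quotient.eq_zero_iff_mem.1 hy)
    · exact (or_iff_right hy).trans (hνb.2.2 y hy).symm
  have hadd := hresb.1.map_add _ _ (hnonneg (x - algebraMap k R c)) (hnonneg (algebraMap k R c))
  rw [← map_add, sub_add_cancel, show resb (f (algebraMap k R c)) = c from hresb.2 c] at hadd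
  change resb (f x) = c ↔ _
  rw [hadd, add_eq_right, hzero]

theorem IsResBar.apply_mk_eq_apply_mk {k : Type u} [Field k] [Algebra k R] {q : RegPrimes R}
    {νb' : ResFieldP q → ℤ} {resb : ResFieldP p → k} {resb' : ResFieldP q → k}
    (hresb : IsResBar p νb resb) (hνb : IsNuBar p νb) (hresb' : IsResBar q νb' resb')
    (hνb' : IsNuBar q νb') (x : R) :
    resb (algebraMap (R ⧸ p.1) (ResFieldP p) (Ideal.Quotient.mk p.1 x)) =
      resb' (algebraMap (R ⧸ q.1) (ResFieldP q) (Ideal.Quotient.mk q.1 x)) := by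
  rw [hresb.apply_mk_eq_iff hνb, ← hresb'.apply_mk_eq_iff hνb']

variable {L : Type u} [Field L] [Algebra R L] [IsFractionRing R L] {ν : L → ℤ}
  {res : L → ResFieldP p} {π σ : R}

theorem IsNuBar.apply_res_paramMonomial (hνb : IsNuBar p νb) (hν : IsNuPrime p.1 ν)
    (hres : IsResPrime p ν res) (hσp : σ ∉ p.1) (j : ℤ) (ξ : Rˣ) :
    νb (res (paramMonomial L π σ 0 j ξ)) =
      j * νb (algebraMap (R ⧸ p.1) (ResFieldP p) (Ideal.Quotient.mk p.1 σ)) := by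
  have hσ : algebraMap R L σ ≠ 0 :=
    algebraMap_ne_zero (ne_of_mem_of_not_mem p.1.zero_mem hσp).symm
  have hνσ := hν.apply_eq_zero_of_notMem hσp
  have hνσj : ν (algebraMap R L σ ^ j) = 0 := by rw [hν.1.map_zpow hσ, hνσ, mul_zero]
  have hresσ := hres.1.apply_ne_zero hσ hνσ
  have hresξ := hres.1.apply_ne_zero (algebraMap_ne_zero (K := L) ξ.ne_zero) (hν.apply_unit ξ)
  have hνbξ : νb (res (algebraMap R L ξ)) = 0 := by
    rw [hres.apply_algebraMap]
    exact hνb.isNuPrime.apply_unit (Units.map (Ideal.Quotient.mk p.1).toMonoidHom ξ)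
  rw [paramMonomial, zpow_zero, one_mul,
    hres.1.map_mul _ _ (.inr hνσj.ge) (.inr (hν.apply_unit ξ).ge), hres.1.map_zpow hν.1 hσ hνσ,
    hνb.1.map_mul _ _ (zpow_ne_zero _ hresσ) hresξ, hνb.1.map_zpow hresσ, hνbξ, add_zero,
    hres.apply_algebraMap]

variable [IsNoetherianRing R] {k : Type u} [Field k] {resb : ResFieldP p → k}
  {D : ⋀[ℚ]^2 (UnitsQ L) →ₗ[ℚ] UnitsQ (ResFieldP p)}
  {DB : B2 L ⊗[ℚ] (⋀[ℚ]^2 (UnitsQ L)) →ₗ[ℚ] B2 (ResFieldP p) ⊗[ℚ] UnitsQ (ResFieldP p)}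
  {DB' : B2 (ResFieldP p) ⊗[ℚ] UnitsQ (ResFieldP p) →ₗ[ℚ] B2 k}

theorem IsTameB1.apply_isTameB2_paramMonomial (hπσ : Ideal.span {π, σ} = maximalIdeal R)
    (hπ : π ≠ 0) (hp : p.1 = Ideal.span {π}) (hσp : σ ∉ p.1) (hν : IsNuPrime p.1 ν)
    (hres : IsResPrime p ν res) (hνb : IsNuBar p νb) (hD : IsTame2U ν res D)
    (hDB : IsTameB2 ν res D DB) (hDB' : IsTameB1 νb resb DB')
    (n m a₃ b₃ a₄ b₄ : ℤ) (ξ₁ ξ₃ ξ₄ : Rˣ) :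
    DB' (DB (B2.gen (paramMonomial L π σ n m ξ₁) ⊗ₜ
      wedgeF 2 ![paramMonomial L π σ a₃ b₃ ξ₃, paramMonomial L π σ a₄ b₄ ξ₄])) =
    if n = 0 ∧ m = 0 then ((a₃ : ℚ) * b₄ - a₄ * b₃) • B2.gen (resb (algebraMap (R ⧸ p.1)
      (ResFieldP p) (Ideal.Quotient.mk p.1 ξ₁))) else 0 := by
  have hσ : σ ≠ 0 := (ne_of_mem_of_not_mem p.1.zero_mem hσp).symm
  have hπp : π ∈ p.1 := hp ▸ Ideal.mem_span_singleton_self π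
  have hνπ : ν (algebraMap R L π) = 1 := IsNuPrime.apply_generator hπ (hp ▸ hν)
  have hne (i j : ℤ) (ξ : Rˣ) : paramMonomial L π σ i j ξ ≠ 0 := paramMonomial_ne_zero hπ hσ i j ξ
  have hval (i j : ℤ) (ξ : Rˣ) : ν (paramMonomial L π σ i j ξ) = i := by
    rw [hν.apply_paramMonomial hπ hσ, hνπ, hν.apply_eq_zero_of_notMem hσp, mul_one, mul_zero,
      add_zero]
  have hvalb (j : ℤ) (ξ : Rˣ) : νb (res (paramMonomial L π σ 0 j ξ)) = j := by
    rw [hνb.apply_res_paramMonomial hν hres hσp, hνb.apply_generator hπσ hπp hσp, mul_one]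
  by_cases hn : n = 0
  · subst hn
    rw [paramMonomial_eq_zpow_mul π σ a₃, paramMonomial_eq_zpow_mul π σ a₄,
      hDB'.apply_isTameB2 hνb.1 hDB hD hν.1 hres.1 (algebraMap_ne_zero hπ) hνπ
        (hne _ _ _) (hval _ _ _) (hne _ _ _) (hval _ _ _) (hne _ _ _) (hval _ _ _),
      hvalb, hvalb, hvalb]
    by_cases hm : m = 0
    · subst hm
      simp only [and_self, if_true, paramMonomial_zero_zero, hres.apply_algebraMap]
    · simp only [hm, and_false, if_false]
  · have hνn : ν (paramMonomial L π σ n m ξ₁) ≠ 0 := by rwa [hval]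
    rw [hDB.1 _ _ (hne _ _ _) (hν.1.ne_one_of_apply_ne_zero hνn) hνn, map_zero, if_neg (hn ·.1)]

end ResidueFields

theorem finite_support_and_finsum_eq_zero_of_add_eq_zero {α M : Type*} [AddCommMonoid M]
    {f : α → M} {a b : α} (hab : a ≠ b) (hsum : f a + f b = 0)
    (hother : ∀ x, x ≠ a → x ≠ b → f x = 0) : f.support.Finite ∧ ∑ᶠ x, f x = 0 := by
  classical
  have hsupp : f.support ⊆ ({a, b} : Finset α) := by
    intro x hx
    by_contra hxab
    simp only [Finset.coe_pair, Set.mem_insert_iff, Set.mem_singleton_iff, not_or] at hxab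
    exact hx (hother x hxab.1 hxab.2)
  refine ⟨(Finset.finite_toSet _).subset hsupp, ?_⟩
  rw [finsum_eq_sum_of_support_subset f hsupp, Finset.sum_pair hab, hsum]

theorem statement_9_general (k R L : Type u) [Field k]
    [CommRing R] [IsDomain R] [IsLocalRing R] [IsNoetherianRing R] [Algebra k R]
    [Field L] [Algebra R L] [IsFractionRing R L]
    (hdim : ringKrullDim R = 2)
    (π₁ π₂ : R) (hπ : Ideal.span {π₁, π₂} = IsLocalRing.maximalIdeal R)
    (νp : RegPrimes R → L → ℤ) (hνp : ∀ p, IsNuPrime p.1 (νp p))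
    (resp : ∀ p : RegPrimes R, L → ResFieldP p) (hresp : ∀ p, IsResPrime p (νp p) (resp p))
    (νb : ∀ p : RegPrimes R, ResFieldP p → ℤ) (hνb : ∀ p, IsNuBar p (νb p))
    (resb : ∀ p : RegPrimes R, ResFieldP p → k) (hresb : ∀ p, IsResBar p (νb p) (resb p))
    (D2 : ∀ p : RegPrimes R, ⋀[ℚ]^2 (UnitsQ L) →ₗ[ℚ] UnitsQ (ResFieldP p))
    (hD2 : ∀ p, IsTame2U (νp p) (resp p) (D2 p))
    (DB : ∀ p : RegPrimes R,
      B2 L ⊗[ℚ] (⋀[ℚ]^2 (UnitsQ L)) →ₗ[ℚ] B2 (ResFieldP p) ⊗[ℚ] UnitsQ (ResFieldP p))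
    (hDB : ∀ p, IsTameB2 (νp p) (resp p) (D2 p) (DB p))
    (DB' : ∀ p : RegPrimes R,
      B2 (ResFieldP p) ⊗[ℚ] UnitsQ (ResFieldP p) →ₗ[ℚ] B2 k)
    (hDB' : ∀ p, IsTameB1 (νb p) (resb p) (DB' p))
    (n m a₃ b₃ a₄ b₄ : ℤ) (ξ₁ ξ₃ ξ₄ : Rˣ)
    (b : B2 L ⊗[ℚ] (⋀[ℚ]^2 (UnitsQ L)))
    (hb : b = B2.gen (paramMonomial L π₁ π₂ n m ξ₁) ⊗ₜ
      wedgeF 2 ![paramMonomial L π₁ π₂ a₃ b₃ ξ₃, paramMonomial L π₁ π₂ a₄ b₄ ξ₄]) :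
    {p : RegPrimes R | DB' p (DB p b) ≠ 0}.Finite ∧
    ∑ᶠ p : RegPrimes R, DB' p (DB p b) = 0 := by
  have hdim' : 1 < ringKrullDim R := hdim ▸ Nat.one_lt_ofNat
  have hπ' : Ideal.span {π₂, π₁} = IsLocalRing.maximalIdeal R := Set.pair_comm π₁ π₂ ▸ hπ
  let p₁ := RegPrimes.ofParam hdim' hπ
  let p₂ := RegPrimes.ofParam hdim' hπ'
  have hval₁ := (hDB' p₁).apply_isTameB2_paramMonomial hπ (ne_zero_of_span_pair hdim' hπ) rfl
    (notMem_span_singleton_of_span_pair hdim' hπ) (hνp p₁) (hresp p₁) (hνb p₁) (hD2 p₁) (hDB p₁)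
    n m a₃ b₃ a₄ b₄ ξ₁ ξ₃ ξ₄
  have hval₂ := (hDB' p₂).apply_isTameB2_paramMonomial hπ' (ne_zero_of_span_pair hdim' hπ') rfl
    (notMem_span_singleton_of_span_pair hdim' hπ') (hνp p₂) (hresp p₂) (hνb p₂) (hD2 p₂) (hDB p₂)
    m n b₃ a₃ b₄ a₄ ξ₁ ξ₃ ξ₄
  simp only [paramMonomial_swap π₂ π₁, ← hb] at hval₁ hval₂
  rw [(hresb p₂).apply_mk_eq_apply_mk (hνb p₂) (hresb p₁) (hνb p₁)] at hval₂
  have hsum : DB' p₁ (DB p₁ b) + DB' p₂ (DB p₂ b) = 0 := by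
    simp only [hval₁, hval₂, and_comm (a := m = 0)]
    split_ifs
    · module
    · exact add_zero 0
  have hother (p : RegPrimes R) (hp₁ : p ≠ p₁) (hp₂ : p ≠ p₂) : DB' p (DB p b) = 0 := by
    rw [hb, IsTameB2.apply_paramMonomial_of_notMem (hνp p) (hD2 p) (hDB p)
      (mt (RegPrimes.eq_ofParam_of_mem hdim' hπ) hp₁)
      (mt (RegPrimes.eq_ofParam_of_mem hdim' hπ') hp₂), map_zero]
  exact finite_support_and_finsum_eq_zero_of_add_eq_zero
    (RegPrimes.ofParam_ne_ofParam_swap hdim' hπ hπ') hsum hother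

/-- Parshin reciprocity for strictly regular elements of `B₂(L) ⊗ Λ² L^×`
over a two-dimensional regular local ring. -/
theorem statement_9 (k R L : Type u) [Field k] [IsAlgClosed k] [CharZero k]
    [CommRing R] [IsDomain R] [IsLocalRing R] [IsNoetherianRing R] [Algebra k R]
    [Field L] [Algebra R L] [IsFractionRing R L]
    (hdim : ringKrullDim R = 2)
    (hresk : ∀ x : R, ∃ c : k, x - algebraMap k R c ∈ IsLocalRing.maximalIdeal R)
    (π₁ π₂ : R) (hπ : Ideal.span {π₁, π₂} = IsLocalRing.maximalIdeal R)
    (νp : ∀ p : RegPrimes R, L → ℤ) (hνp : ∀ p, IsNuPrime p.1 (νp p))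
    (resp : ∀ p : RegPrimes R, L → ResFieldP p) (hresp : ∀ p, IsResPrime p (νp p) (resp p))
    (νb : ∀ p : RegPrimes R, ResFieldP p → ℤ) (hνb : ∀ p, IsNuBar p (νb p))
    (resb : ∀ p : RegPrimes R, ResFieldP p → k) (hresb : ∀ p, IsResBar p (νb p) (resb p))
    (D2 : ∀ p : RegPrimes R, ⋀[ℚ]^2 (UnitsQ L) →ₗ[ℚ] UnitsQ (ResFieldP p))
    (hD2 : ∀ p, IsTame2U (νp p) (resp p) (D2 p))
    (DB : ∀ p : RegPrimes R,
      B2 L ⊗[ℚ] (⋀[ℚ]^2 (UnitsQ L)) →ₗ[ℚ] B2 (ResFieldP p) ⊗[ℚ] UnitsQ (ResFieldP p))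
    (hDB : ∀ p, IsTameB2 (νp p) (resp p) (D2 p) (DB p))
    (DB' : ∀ p : RegPrimes R,
      B2 (ResFieldP p) ⊗[ℚ] UnitsQ (ResFieldP p) →ₗ[ℚ] B2 k)
    (hDB' : ∀ p, IsTameB1 (νb p) (resb p) (DB' p))
    (n m a₃ b₃ a₄ b₄ : ℤ) (ξ₁ ξ₃ ξ₄ : Rˣ)
    (b : B2 L ⊗[ℚ] (⋀[ℚ]^2 (UnitsQ L)))
    (hb : b = B2.gen ((algebraMap R L π₁) ^ n * (algebraMap R L π₂) ^ m *
        algebraMap R L (ξ₁ : R)) ⊗ₜ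
      wedgeF 2 ![(algebraMap R L π₁) ^ a₃ * (algebraMap R L π₂) ^ b₃ *
          algebraMap R L (ξ₃ : R),
        (algebraMap R L π₁) ^ a₄ * (algebraMap R L π₂) ^ b₄ *
          algebraMap R L (ξ₄ : R)]) :
    {p : RegPrimes R | DB' p (DB p b) ≠ 0}.Finite ∧
    ∑ᶠ p : RegPrimes R, DB' p (DB p b) = 0 :=
  statement_9_general k R L hdim π₁ π₂ hπ νp hνp resp hresp νb hνb resb hresb D2 hD2 DB hDB
    DB' hDB' n m a₃ b₃ a₄ b₄ ξ₁ ξ₃ ξ₄ b hb
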